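/- arXiv:2102.05289 — 2 statements merged into one kernel-verified Lean document; each statement's English description precedes it below -/
import Mathlib

section
/- Let l, u ∈ ℝ^C with l_j ≤ u_j for all j, and let y be a class. Define f_LB ∈ ℝ^C by f_{LB,y} = l_y and f_{LB,j} = u_j for j ≠ y. Then f_LB lies in the box {z ∈ ℝ^C : l_j ≤ z_j ≤ u_j for all j} and σ_y(f_LB) ≤ σ_y(z) for every z in this box; hence σ_y(f_LB) equals the minimum of σ_y over the box. -/
/-- Softmax probability of class `y` for logits `z ∈ ℝ^C`. -/
noncomputable def softmax {C : ℕ} (y : Fin C) (z : Fin C → ℝ) : ℝ :=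
  Real.exp (z y) / ∑ j, Real.exp (z j)

/-- The corner vector `f_LB` with `f_{LB,y} = l y` and `f_{LB,j} = u j` for `j ≠ y`. -/
def cornerLB {C : ℕ} (y : Fin C) (l u : Fin C → ℝ) : Fin C → ℝ :=
  fun j => if j = y then l j else u j

/-! Dividing through by `exp (z y)` gives `softmax y z = 1 / ∑ j, exp (z j - z y)`, so the softmax
is antitone in the differences `z j - z y`. The corner vector makes all of these differences as
large as the box allows at once. -/

section Softmax

variable {C : ℕ} {y : Fin C}

theorem softmax_eq_inv_sum_exp_sub (y : Fin C) (z : Fin C → ℝ) :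
    softmax y z = (∑ j, Real.exp (z j - z y))⁻¹ := by
  simp only [softmax, Real.exp_sub, ← Finset.sum_div, inv_div]

theorem softmax_le_softmax_of_sub_le_sub {w z : Fin C → ℝ}
    (h : ∀ j, z j - z y ≤ w j - w y) : softmax y w ≤ softmax y z := by
  have sum_exp_pos : 0 < ∑ j, Real.exp (z j - z y) :=
    Finset.sum_pos (fun _ _ => Real.exp_pos _) ⟨y, Finset.mem_univ y⟩
  rw [softmax_eq_inv_sum_exp_sub, softmax_eq_inv_sum_exp_sub]
  exact inv_anti₀ sum_exp_pos (Finset.sum_le_sum fun j _ => Real.exp_le_exp.mpr (h j))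

theorem softmax_le_softmax_of_le_of_forall_ne_le {w z : Fin C → ℝ} (hy : w y ≤ z y)
    (hne : ∀ j ≠ y, z j ≤ w j) : softmax y w ≤ softmax y z := by
  refine softmax_le_softmax_of_sub_le_sub fun j => ?_
  obtain rfl | hj := eq_or_ne j y
  · rw [sub_self, sub_self]
  · exact sub_le_sub (hne j hj) hy

end Softmax

section CornerLB

variable {C : ℕ} {y : Fin C} {l u : Fin C → ℝ}

theorem cornerLB_self (y : Fin C) (l u : Fin C → ℝ) : cornerLB y l u y = l y :=
  if_pos rfl

theorem cornerLB_of_ne {j : Fin C} (hj : j ≠ y) : cornerLB y l u j = u j :=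
  if_neg hj

theorem cornerLB_mem_Icc {j : Fin C} (hlu : l j ≤ u j) :
    cornerLB y l u j ∈ Set.Icc (l j) (u j) := by
  obtain rfl | hj := eq_or_ne j y
  · rw [cornerLB_self]
    exact Set.left_mem_Icc.mpr hlu
  · rw [cornerLB_of_ne hj]
    exact Set.right_mem_Icc.mpr hlu

theorem softmax_cornerLB_le {z : Fin C → ℝ} (hl : l y ≤ z y) (hu : ∀ j ≠ y, z j ≤ u j) :
    softmax y (cornerLB y l u) ≤ softmax y z :=
  softmax_le_softmax_of_le_of_forall_ne_le ((cornerLB_self y l u).trans_le hl)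
    fun j hj => (hu j hj).trans_eq (cornerLB_of_ne hj).symm

end CornerLB

/-- `f_LB` lies in the box `[l, u]`, `σ_y(f_LB) ≤ σ_y(z)` for every `z`
in the box, and hence `σ_y(f_LB)` is the minimum of `σ_y` over the box. -/
theorem cornerLB_isLeast {C : ℕ} (l u : Fin C → ℝ) (hlu : ∀ j, l j ≤ u j) (y : Fin C) :
    (∀ j, l j ≤ cornerLB y l u j ∧ cornerLB y l u j ≤ u j) ∧
    (∀ z : Fin C → ℝ, (∀ j, l j ≤ z j ∧ z j ≤ u j) →
      softmax y (cornerLB y l u) ≤ softmax y z) ∧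
    IsLeast (softmax y '' {z : Fin C → ℝ | ∀ j, l j ≤ z j ∧ z j ≤ u j})
      (softmax y (cornerLB y l u)) := by
  have corner_mem : ∀ j, l j ≤ cornerLB y l u j ∧ cornerLB y l u j ≤ u j :=
    fun j => cornerLB_mem_Icc (hlu j)
  have corner_le : ∀ z : Fin C → ℝ, (∀ j, l j ≤ z j ∧ z j ≤ u j) →
      softmax y (cornerLB y l u) ≤ softmax y z :=
    fun z hz => softmax_cornerLB_le (hz y).1 fun j _ => (hz j).2
  exact ⟨corner_mem, corner_le, Set.mem_image_of_mem _ corner_mem,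
    Set.forall_mem_image.mpr corner_le⟩
end

section
/- Consider a K-layer feedforward network with monotone nondecreasing activation h, an input x ∈ ℝ^{n_0} and ε ≥ 0, and run interval bound propagation (IBP). Then for every x' ∈ ℝ^{n_0} with ‖x − x'‖_∞ ≤ ε and every k = 1,…,K, the pre-activations computed on x' satisfy f_{(k)}^L ≤ f_{(k)}(x') ≤ f_{(k)}^U componentwise, and for k = 1,…,K−1 the activations satisfy φ_{(k)}^L ≤ φ_{(k)}(x') ≤ φ_{(k)}^U componentwise. -/
/-- Activations of a feedforward network: `netPhi … x 0 = x` (the input `φ_(0)`) and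
`netPhi … x (k+1) = h (W_k (netPhi … x k) + b_k)` (the activation `φ_(k+1)`).
For a `K`-layer network only the values with `k ≤ K - 1` are used. -/
noncomputable def netPhi (n : ℕ → ℕ)
    (W : ∀ k : ℕ, Matrix (Fin (n (k + 1))) (Fin (n k)) ℝ)
    (b : ∀ k : ℕ, Fin (n (k + 1)) → ℝ) (h : ℝ → ℝ)
    (x : Fin (n 0) → ℝ) : (k : ℕ) → Fin (n k) → ℝ
  | 0 => x
  | (k + 1) => fun i => h (((W k).mulVec (netPhi n W b h x k) + b k) i)

/-- Pre-activations: `netPre … x k = W_k φ_(k) + b_k`, i.e. the pre-activation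
`f_(k+1)` of the network.  The output of a `K`-layer network is `f^w(x) = netPre … x (K-1)`. -/
noncomputable def netPre (n : ℕ → ℕ)
    (W : ∀ k : ℕ, Matrix (Fin (n (k + 1))) (Fin (n k)) ℝ)
    (b : ∀ k : ℕ, Fin (n (k + 1)) → ℝ) (h : ℝ → ℝ)
    (x : Fin (n 0) → ℝ) (k : ℕ) : Fin (n (k + 1)) → ℝ :=
  (W k).mulVec (netPhi n W b h x k) + b k

/-- Interval bound propagation on the activations: `ibpPhi … x ε k = (φ_(k)^L, φ_(k)^U)`.
At `k = 0` the bounds are `x ∓ ε·𝟙`; at `k+1` they are `h (μ_{k+1} ∓ r_{k+1})` with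
`μ_{k+1} = W_k (φ_(k)^U + φ_(k)^L)/2 + b_k` and `r_{k+1} = |W_k| (φ_(k)^U − φ_(k)^L)/2`. -/
noncomputable def ibpPhi (n : ℕ → ℕ)
    (W : ∀ k : ℕ, Matrix (Fin (n (k + 1))) (Fin (n k)) ℝ)
    (b : ∀ k : ℕ, Fin (n (k + 1)) → ℝ) (h : ℝ → ℝ)
    (x : Fin (n 0) → ℝ) (ε : ℝ) : (k : ℕ) → (Fin (n k) → ℝ) × (Fin (n k) → ℝ)
  | 0 => (fun i => x i - ε, fun i => x i + ε)
  | (k + 1) =>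
      let L := (ibpPhi n W b h x ε k).1
      let U := (ibpPhi n W b h x ε k).2
      let μ := (W k).mulVec (fun i => (U i + L i) / 2) + b k
      let r := (Matrix.of fun i j => |W k i j|).mulVec (fun i => (U i - L i) / 2)
      (fun i => h (μ i - r i), fun i => h (μ i + r i))

/-- Interval bound propagation on the pre-activations:
`ibpPre … x ε k = (f_(k+1)^L, f_(k+1)^U) = (μ_{k+1} − r_{k+1}, μ_{k+1} + r_{k+1})`.
The IBP output bounds of a `K`-layer network are `(f^{w,L,ε}, f^{w,U,ε}) = ibpPre … x ε (K-1)`. -/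
noncomputable def ibpPre (n : ℕ → ℕ)
    (W : ∀ k : ℕ, Matrix (Fin (n (k + 1))) (Fin (n k)) ℝ)
    (b : ∀ k : ℕ, Fin (n (k + 1)) → ℝ) (h : ℝ → ℝ)
    (x : Fin (n 0) → ℝ) (ε : ℝ) (k : ℕ) : (Fin (n (k + 1)) → ℝ) × (Fin (n (k + 1)) → ℝ) :=
  let L := (ibpPhi n W b h x ε k).1
  let U := (ibpPhi n W b h x ε k).2
  let μ := (W k).mulVec (fun i => (U i + L i) / 2) + b k
  let r := (Matrix.of fun i j => |W k i j|).mulVec (fun i => (U i - L i) / 2)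
  (fun i => μ i - r i, fun i => μ i + r i)

open Matrix Set

theorem mem_Icc_sub_add_of_abs_sub_le {α : Type*} [Lattice α] [AddCommGroup α]
    [IsOrderedAddMonoid α] {x y r : α} (hxy : |x - y| ≤ r) : y ∈ Icc (x - r) (x + r) := by
  obtain ⟨hle, hge⟩ := abs_le'.mp hxy
  rw [neg_sub] at hge
  exact ⟨sub_le_comm.mp hle, sub_le_iff_le_add'.mp hge⟩

theorem mem_Icc_of_norm_sub_le {ι : Type*} [Fintype ι] {x y : ι → ℝ} {ε : ℝ}
    (hxy : ‖x - y‖ ≤ ε) : y ∈ Icc (fun i => x i - ε) (fun i => x i + ε) :=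
  mem_Icc_sub_add_of_abs_sub_le fun i => (norm_le_pi_norm (x - y) i).trans hxy

section IntervalArithmetic

variable {m n R : Type*} [Fintype n]

theorem abs_mulVec_sub_mulVec_le [Ring R] [LinearOrder R] [IsOrderedRing R]
    (A : Matrix m n R) {x y r : n → R} (hxy : |x - y| ≤ r) :
    |A *ᵥ x - A *ᵥ y| ≤ A.map abs *ᵥ r := by
  intro i
  calc |(A *ᵥ x - A *ᵥ y) i|
      = |∑ j, A i j * (x - y) j| := by rw [← mulVec_sub]; rfl
    _ ≤ ∑ j, |A i j * (x - y) j| := Finset.abs_sum_le_sum_abs _ _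
    _ = ∑ j, |A i j| * |x - y| j := by simp only [abs_mul, Pi.abs_apply]
    _ ≤ ∑ j, |A i j| * r j := by gcongr with j; exact hxy j

variable [Field R] [LinearOrder R] [IsStrictOrderedRing R]

theorem abs_midpoint_sub_le_of_mem_Icc {l u t : R} (ht : t ∈ Icc l u) :
    |(u + l) / 2 - t| ≤ (u - l) / 2 := by
  rw [abs_le]
  constructor <;> linarith [ht.1, ht.2]

theorem mulVec_add_mem_Icc (A : Matrix m n R) (b : m → R) {l u v : n → R} (hv : v ∈ Icc l u) :
    A *ᵥ v + b ∈ Icc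
      (A *ᵥ (fun j => (u j + l j) / 2) + b - A.map abs *ᵥ fun j => (u j - l j) / 2)
      (A *ᵥ (fun j => (u j + l j) / 2) + b + A.map abs *ᵥ fun j => (u j - l j) / 2) := by
  have hdev : |(fun j => (u j + l j) / 2) - v| ≤ fun j => (u j - l j) / 2 :=
    fun j => abs_midpoint_sub_le_of_mem_Icc ⟨hv.1 j, hv.2 j⟩
  apply mem_Icc_sub_add_of_abs_sub_le
  rw [add_sub_add_right_eq_sub]
  exact abs_mulVec_sub_mulVec_le A hdev

end IntervalArithmetic

section IntervalBoundPropagation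

variable {n : ℕ → ℕ} {W : ∀ k : ℕ, Matrix (Fin (n (k + 1))) (Fin (n k)) ℝ}
  {b : ∀ k : ℕ, Fin (n (k + 1)) → ℝ} {h : ℝ → ℝ} {x x' : Fin (n 0) → ℝ} {ε : ℝ} {k : ℕ}

theorem netPre_mem_Icc_of_netPhi_mem_Icc
    (hk : netPhi n W b h x' k ∈ Icc (ibpPhi n W b h x ε k).1 (ibpPhi n W b h x ε k).2) :
    netPre n W b h x' k ∈ Icc (ibpPre n W b h x ε k).1 (ibpPre n W b h x ε k).2 :=
  mulVec_add_mem_Icc (W k) (b k) hk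

theorem netPhi_succ_mem_Icc_of_netPre_mem_Icc (hmono : Monotone h)
    (hk : netPre n W b h x' k ∈ Icc (ibpPre n W b h x ε k).1 (ibpPre n W b h x ε k).2) :
    netPhi n W b h x' (k + 1) ∈
      Icc (ibpPhi n W b h x ε (k + 1)).1 (ibpPhi n W b h x ε (k + 1)).2 :=
  ⟨fun i => hmono (hk.1 i), fun i => hmono (hk.2 i)⟩

theorem netPhi_mem_Icc_ibpPhi (hmono : Monotone h) (hx' : ‖x - x'‖ ≤ ε) (k : ℕ) :
    netPhi n W b h x' k ∈ Icc (ibpPhi n W b h x ε k).1 (ibpPhi n W b h x ε k).2 := by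
  induction k with
  | zero => exact mem_Icc_of_norm_sub_le hx'
  | succ k ih =>
    exact netPhi_succ_mem_Icc_of_netPre_mem_Icc hmono (netPre_mem_Icc_of_netPhi_mem_Icc ih)

end IntervalBoundPropagation

/-- validity of the intermediate IBP bounds.  For a `K`-layer network
(`K ≥ 1`) with monotone nondecreasing activation `h`, input `x` and radius `ε ≥ 0`,
every `x'` with `‖x − x'‖_∞ ≤ ε` has its pre-activations `f_(k)` (for `k = 1,…,K`,
i.e. `netPre … x' k` for `k = 0,…,K−1`) inside `[f_(k)^L, f_(k)^U]` and its activations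
`φ_(k)` (for `k = 1,…,K−1`) inside `[φ_(k)^L, φ_(k)^U]`, componentwise. -/
theorem ibp_intermediate_bounds (n : ℕ → ℕ)
    (W : ∀ k : ℕ, Matrix (Fin (n (k + 1))) (Fin (n k)) ℝ)
    (b : ∀ k : ℕ, Fin (n (k + 1)) → ℝ) (h : ℝ → ℝ) (hmono : Monotone h)
    (K : ℕ) (hK : 1 ≤ K) (x : Fin (n 0) → ℝ) (ε : ℝ) (hε : 0 ≤ ε)
    (x' : Fin (n 0) → ℝ) (hx' : ‖x - x'‖ ≤ ε) :
    (∀ k, k < K → ∀ i,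
        (ibpPre n W b h x ε k).1 i ≤ netPre n W b h x' k i ∧
        netPre n W b h x' k i ≤ (ibpPre n W b h x ε k).2 i) ∧
    (∀ k, 1 ≤ k → k ≤ K - 1 → ∀ i,
        (ibpPhi n W b h x ε k).1 i ≤ netPhi n W b h x' k i ∧
        netPhi n W b h x' k i ≤ (ibpPhi n W b h x ε k).2 i) := by
  have hphi := netPhi_mem_Icc_ibpPhi (W := W) (b := b) hmono hx'
  refine ⟨fun k _ i => ?_, fun k _ _ i => ⟨(hphi k).1 i, (hphi k).2 i⟩⟩
  have hpre := netPre_mem_Icc_of_netPhi_mem_Icc (hphi k)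
  exact ⟨hpre.1 i, hpre.2 i⟩
end
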